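/- Let L > 1 be an integer, let J be a finite-range step distribution invariant under lattice reflections and rotations containing the nearest-neighbour vectors, let γ ∈ (0,1/3), and let |s| be sufficiently small (depending only on J and γ). For every f ∈ C_c^∞(R^2) with ∫ f dx = 0, every admissible discretisation (f_ε) of f, and every sequence (ε_N) with ε_N → 0 and ε_N L^N → ∞: lim_{N→∞} lim_{m^2↓0} (f_{ε_N}, C̃^{Λ_N}(s,m^2) f_{ε_N}) = (v_J^2 + s)^{−1} · (f, (−Δ_{R^2})^{−1} f)_{R^2}. -/

import Mathlib

open Filter Real MeasureTheory

noncomputable section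

/-- The two-dimensional discrete torus of side length `n`. -/
abbrev Torus (n : ℕ) := ZMod n × ZMod n

/-- Canonical projection `ℤ² → Λ_n`. -/
def torusProj (n : ℕ) (x : ℤ × ℤ) : Torus n := ((x.1 : ZMod n), (x.2 : ZMod n))

/-- A finite-range step distribution: a finite subset of `ℤ²∖{0}` invariant under lattice
reflections and rotations and containing the nearest-neighbour vectors. -/
structure StepDist (J : Finset (ℤ × ℤ)) : Prop where
  not_zero : ((0 : ℤ), (0 : ℤ)) ∉ J
  nn₁ : ((1 : ℤ), (0 : ℤ)) ∈ J
  nn₂ : ((-1 : ℤ), (0 : ℤ)) ∈ J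
  nn₃ : ((0 : ℤ), (1 : ℤ)) ∈ J
  nn₄ : ((0 : ℤ), (-1 : ℤ)) ∈ J
  refl₁ : ∀ x ∈ J, ((-x.1, x.2) : ℤ × ℤ) ∈ J
  refl₂ : ∀ x ∈ J, ((x.1, -x.2) : ℤ × ℤ) ∈ J
  rot : ∀ x ∈ J, ((-x.2, x.1) : ℤ × ℤ) ∈ J

/-- The normalised range-`J` Laplacian on the torus `Λ_n`. -/
def laplacianJ (J : Finset (ℤ × ℤ)) (n : ℕ) (f : Torus n → ℝ) (x : Torus n) : ℝ :=
  (J.card : ℝ)⁻¹ * ∑ y ∈ J, (f (x + torusProj n y) - f x)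

/-- Configuration space of the Discrete Gaussian model: `2πℤ`-valued fields pinned at `0`. -/
def DGConfigs (n : ℕ) : Set (Torus n → ℝ) :=
  {σ | (∀ x, ∃ k : ℤ, σ x = 2 * Real.pi * k) ∧ σ 0 = 0}

/-- The energy `(1/(2β)) (σ, −Δ_J σ)`. -/
def dgEnergy (J : Finset (ℤ × ℤ)) (n : ℕ) (β : ℝ) (σ : Torus n → ℝ) : ℝ :=
  (1 / (2 * β)) * ∑' x : Torus n, σ x * -(laplacianJ J n σ x)

/-- Expectation of the Discrete Gaussian model on `Λ_n` at temperature `β`. -/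
def dgExpect (J : Finset (ℤ × ℤ)) (n : ℕ) (β : ℝ) (F : (Torus n → ℝ) → ℝ) : ℝ :=
  (∑' σ : DGConfigs n, Real.exp (-(dgEnergy J n β σ.1)) * F σ.1) /
    (∑' σ : DGConfigs n, Real.exp (-(dgEnergy J n β σ.1)))

/-- Pairing `(g, σ)` of a (finitely supported) `g : ℤ² → ℝ`, identified with a function on the
torus via the canonical projection, with a field `σ` on the torus. -/
def torusPairing (n : ℕ) (g : ℤ × ℤ → ℝ) (σ : Torus n → ℝ) : ℝ :=
  ∑' x : ℤ × ℤ, g x * σ (torusProj n x)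

/-- `v_J² = (2|J|)⁻¹ Σ_{x∈J} x₁²`. -/
def vJsq (J : Finset (ℤ × ℤ)) : ℝ :=
  (2 * (J.card : ℝ))⁻¹ * ∑ x ∈ J, ((x.1 : ℝ)) ^ 2

/-- Continuum Fourier transform `f̂(p) = ∫ f(x) e^{−i p·x} dx` on `ℝ²`. -/
def contFT (f : ℝ × ℝ → ℝ) (p : ℝ × ℝ) : ℂ :=
  ∫ x : ℝ × ℝ, (f x : ℂ) * Complex.exp (-Complex.I * ((p.1 * x.1 + p.2 * x.2 : ℝ) : ℂ))

/-- `(f, (−Δ_{ℝ²})⁻¹ f) = (2π)⁻² ∫ |p|⁻² |f̂(p)|² dp`. -/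
def gffPairing (f : ℝ × ℝ → ℝ) : ℝ :=
  ((2 * Real.pi) ^ 2)⁻¹ * ∫ p : ℝ × ℝ, Complex.normSq (contFT f p) / (p.1 ^ 2 + p.2 ^ 2)

/-- The four nearest-neighbour directions in `ℤ²`. -/
def dirsZ : Finset (ℤ × ℤ) := {((1 : ℤ), (0 : ℤ)), (-1, 0), (0, 1), (0, -1)}

/-- `(f_ε)` is an admissible discretisation of `f` with constant `C_f`. -/
structure IsAdmissible (f : ℝ × ℝ → ℝ) (fε : ℝ → (ℤ × ℤ) → ℝ) (Cf : ℝ) : Prop where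
  finite_supp : ∀ ε ∈ Set.Ioo (0 : ℝ) 1, (Function.support (fε ε)).Finite
  sum_zero : ∀ ε ∈ Set.Ioo (0 : ℝ) 1, ∑' x : ℤ × ℤ, fε ε x = 0
  grad0 : ∀ ε ∈ Set.Ioo (0 : ℝ) 1, ∀ x : ℤ × ℤ, |fε ε x| ≤ Cf * ε ^ 2
  grad1 : ∀ ε ∈ Set.Ioo (0 : ℝ) 1, ∀ x : ℤ × ℤ, ∀ μ ∈ dirsZ,
    |ε⁻¹ * (fε ε (x + μ) - fε ε x)| ≤ Cf * ε ^ 2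
  grad2 : ∀ ε ∈ Set.Ioo (0 : ℝ) 1, ∀ x : ℤ × ℤ, ∀ μ ∈ dirsZ, ∀ ν ∈ dirsZ,
    |ε⁻¹ ^ 2 * (fε ε (x + μ + ν) - fε ε (x + ν) - fε ε (x + μ) + fε ε x)| ≤ Cf * ε ^ 2
  supp : ∀ ε ∈ Set.Ioo (0 : ℝ) 1, ∀ x : ℤ × ℤ, fε ε x ≠ 0 →
    |(x.1 : ℝ)| ≤ Cf * ε⁻¹ ∧ |(x.2 : ℝ)| ≤ Cf * ε⁻¹
  approx : ∀ δ > (0 : ℝ), ∃ ε₀ > (0 : ℝ), ∀ ε ∈ Set.Ioo (0 : ℝ) 1, ε < ε₀ →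
    ∀ x : ℤ × ℤ, |ε⁻¹ ^ 2 * fε ε x - f (ε * x.1, ε * x.2)| ≤ δ

/-- The unnormalised nearest-neighbour Laplacian on the torus `Λ_n`. -/
def lapNN (n : ℕ) (f : Torus n → ℝ) (x : Torus n) : ℝ :=
  ∑ μ ∈ dirsZ, (f (x + torusProj n μ) - f x)

/-- Identification of a finitely supported `g : ℤ² → ℝ` with a function on the torus. -/
def toTorus (n : ℕ) (g : ℤ × ℤ → ℝ) (y : Torus n) : ℝ :=
  ∑' x : ℤ × ℤ, if torusProj n x = y then g x else 0

/-- `IsCtildeVal J n γ s m2 g val` says that `val = (g, C̃^{Λ_n}(s,m²) g)`, where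
`C̃(s,m²) = γ(1+sγΔ) + (1+sγΔ) C(s,m²) (1+sγΔ)`, `C(s,m²) = (C(m²)⁻¹ − sΔ)⁻¹` and
`C(m²) = (−Δ_J + m²)⁻¹ − γ·id`.  The operator inverses are encoded by their defining
equations: writing `h = (1+sγΔ)g`, `u = C(s,m²)h` and `w = h + sΔu`, the field `u` is
characterised by `(−Δ_J + m²)(u + γw) = w`, and then
`(g, C̃ g) = γ(g,h) + (g, (1+sγΔ)u)`. -/
def IsCtildeVal (J : Finset (ℤ × ℤ)) (n : ℕ) (γ s m2 : ℝ) (g : Torus n → ℝ) (val : ℝ) :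
    Prop :=
  ∃ u : Torus n → ℝ,
    (∀ x : Torus n,
      -(laplacianJ J n
          (fun y => u y + γ * (g y + s * γ * lapNN n g y + s * lapNN n u y)) x)
        + m2 * (u x + γ * (g x + s * γ * lapNN n g x + s * lapNN n u x))
        = g x + s * γ * lapNN n g x + s * lapNN n u x) ∧
    val = γ * (∑' x : Torus n, g x * (g x + s * γ * lapNN n g x))
        + ∑' x : Torus n, g x * (u x + s * γ * lapNN n u x)

section part1

def cellIdx (δ : ℝ) (x : ℝ × ℝ) : ℤ × ℤ := (⌊x.1 / δ⌋, ⌊x.2 / δ⌋)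

lemma floor_cell_iff {δ : ℝ} (hδ : 0 < δ) (x : ℝ) (k : ℤ) :
    ⌊x / δ⌋ = k ↔ x ∈ Set.Ico (k * δ) ((k + 1) * δ) := by
  rw [Int.floor_eq_iff, Set.mem_Ico, le_div_iff₀ hδ, div_lt_iff₀ hδ]

lemma measurable_cellIdx (δ : ℝ) : Measurable (cellIdx δ) := by
  unfold cellIdx
  fun_prop

lemma integral_cell {E : Type*} [NormedAddCommGroup E] [NormedSpace ℝ E] [CompleteSpace E]
    {δ : ℝ} (hδ : 0 < δ) (H : ℤ × ℤ → E) (F : Finset (ℤ × ℤ)) (hF : ∀ k, k ∉ F → H k = 0) :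
    ∫ x : ℝ × ℝ, H (cellIdx δ x) = (δ ^ 2) • ∑ k ∈ F, H k := by
  classical
  have h1 : (fun x : ℝ × ℝ => H (cellIdx δ x)) = fun x => ∑ k ∈ F,
      (Set.Ico ((k.1 : ℝ) * δ) (((k.1 : ℝ) + 1) * δ) ×ˢ
        Set.Ico ((k.2 : ℝ) * δ) (((k.2 : ℝ) + 1) * δ)).indicator (fun _ => H k) x := by
    funext x
    have h2 : ∀ k : ℤ × ℤ, (Set.Ico ((k.1 : ℝ) * δ) (((k.1 : ℝ) + 1) * δ) ×ˢ
        Set.Ico ((k.2 : ℝ) * δ) (((k.2 : ℝ) + 1) * δ)).indicator (fun _ => H k) x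
        = if cellIdx δ x = k then H k else 0 := by
      intro k
      rw [Set.indicator_apply]
      congr 1
      rw [Set.mem_prod, ← floor_cell_iff hδ, ← floor_cell_iff hδ, cellIdx, Prod.ext_iff]
    simp_rw [h2]
    rw [Finset.sum_ite_eq]
    split_ifs with h
    · rfl
    · exact hF _ h
  have hvol : ∀ k : ℤ × ℤ, (volume : Measure (ℝ × ℝ)) (Set.Ico ((k.1 : ℝ) * δ) (((k.1 : ℝ) + 1) * δ) ×ˢ
        Set.Ico ((k.2 : ℝ) * δ) (((k.2 : ℝ) + 1) * δ)) = ENNReal.ofReal (δ ^ 2) := by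
    intro k
    rw [Measure.volume_eq_prod, Measure.prod_prod, Real.volume_Ico, Real.volume_Ico,
      ← ENNReal.ofReal_mul (by nlinarith)]
    congr 1; ring
  rw [h1, integral_finsetSum, Finset.smul_sum]
  · refine Finset.sum_congr rfl fun k _ => ?_
    rw [integral_indicator_const _ (measurableSet_Ico.prod measurableSet_Ico), measureReal_def, hvol,
      ENNReal.toReal_ofReal (by positivity)]
  · intro k _
    refine (integrable_indicator_iff (measurableSet_Ico.prod measurableSet_Ico)).2 ?_
    refine integrableOn_const ?_ 
    rw [hvol]; exact ENNReal.ofReal_ne_top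

lemma cell_tendsto {δ : ℕ → ℝ} (hδ : ∀ N, 0 < δ N) (h0 : Tendsto δ atTop (nhds 0)) (x : ℝ) :
    Tendsto (fun N => δ N * (⌊x / δ N⌋ : ℝ)) atTop (nhds x) := by
  rw [tendsto_iff_norm_sub_tendsto_zero]
  refine squeeze_zero (fun _ => norm_nonneg _) (fun N => ?_) h0
  have h1 := (floor_cell_iff (hδ N) x _).1 rfl
  rw [Set.mem_Ico] at h1
  rw [Real.norm_eq_abs, abs_le]
  constructor <;> nlinarith [hδ N]

/-! ### Discrete Fourier -/

def chi (n : ℕ) [NeZero n] (k x : Torus n) : ℂ := ZMod.stdAddChar (k.1 * x.1 + k.2 * x.2)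

def tdft (n : ℕ) [NeZero n] (g : Torus n → ℝ) (k : Torus n) : ℂ := ∑ x, (g x : ℂ) * chi n k (-x)

variable (n : ℕ) [NeZero n]

lemma chi_add (k x y : Torus n) : chi n k (x + y) = chi n k x * chi n k y := by
  unfold chi
  rw [← AddChar.map_add_eq_mul]
  congr 1
  simp only [Prod.fst_add, Prod.snd_add]; ring

lemma chi_neg (k x : Torus n) : chi n k (-x) = (starRingEnd ℂ) (chi n k x) := by
  unfold chi
  rw [← AddChar.map_neg_eq_conj]
  congr 1
  simp only [Prod.fst_neg, Prod.snd_neg]; ring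

lemma chi_proj (k : Torus n) (a b : ℤ) (hk : k = torusProj n (a, b)) (x : ℤ × ℤ) :
    chi n k (torusProj n x) = Complex.exp (Complex.I *
      (((2 * π / n * a) * x.1 + (2 * π / n * b) * x.2 : ℝ) : ℂ)) := by
  have : k.1 * (torusProj n x).1 + k.2 * (torusProj n x).2 = ((a * x.1 + b * x.2 : ℤ) : ZMod n) := by
    subst hk; simp [torusProj]
  rw [chi, this, ZMod.stdAddChar_coe]
  congr 1
  push_cast
  field_simp

lemma sum_chi (x : Torus n) : ∑ k, chi n k x = if x = 0 then (n : ℂ) ^ 2 else 0 := by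
  unfold chi
  simp_rw [AddChar.map_add_eq_mul]
  rw [Fintype.sum_prod_type]
  simp_rw [← Finset.mul_sum]
  rw [← Finset.sum_mul]
  rw [AddChar.sum_mulShift _ (ZMod.isPrimitive_stdAddChar n), AddChar.sum_mulShift _ (ZMod.isPrimitive_stdAddChar n)]
  simp only [ZMod.card, Prod.ext_iff, Prod.fst_zero, Prod.snd_zero]
  by_cases h1 : x.1 = 0 <;> by_cases h2 : x.2 = 0 <;> simp [h1, h2, sq]

lemma plancherel (g v : Torus n → ℝ) :
    ∑ k, (starRingEnd ℂ) (tdft n g k) * tdft n v k = (n : ℂ) ^ 2 * ∑ x, (g x : ℂ) * v x := by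
  unfold tdft
  simp_rw [map_sum, Finset.sum_mul_sum]
  rw [Finset.sum_comm, Finset.mul_sum]
  refine Finset.sum_congr rfl fun x _ => ?_
  rw [Finset.sum_comm]
  have : ∀ y, ∑ k, (starRingEnd ℂ) ((g x : ℂ) * chi n k (-x)) * ((v y : ℂ) * chi n k (-y))
      = if x = y then (n : ℂ) ^ 2 * (g x * v y) else 0 := by
    intro y
    have h2 := sum_chi n (x - y)
    simp only [sub_eq_zero] at h2
    have h3 : ∀ k, (starRingEnd ℂ) ((g x : ℂ) * chi n k (-x)) * ((v y : ℂ) * chi n k (-y))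
      = (g x * v y) * chi n k (x - y) := by
      intro k
      rw [sub_eq_add_neg, chi_add, map_mul, ← chi_neg, neg_neg, Complex.conj_ofReal]
      ring
    simp_rw [h3]
    rw [← Finset.mul_sum, h2]
    split_ifs <;> ring
  simp_rw [this]
  simp

lemma tdft_shift (g : Torus n → ℝ) (y k : Torus n) :
    tdft n (fun x => g (x + y)) k = chi n k y * tdft n g k := by
  unfold tdft
  rw [← Equiv.sum_comp (Equiv.addRight y) (fun x => (g x : ℂ) * chi n k (-x)), Finset.mul_sum]
  refine Finset.sum_congr rfl fun x _ => ?_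
  have : chi n k (-x) = chi n k y * chi n k (-(x + y)) := by
    rw [← chi_add]; congr 1; abel
  simp only [Equiv.coe_addRight]
  rw [this]; ring

lemma tdft_add (g h : Torus n → ℝ) (k : Torus n) :
    tdft n (fun x => g x + h x) k = tdft n g k + tdft n h k := by
  unfold tdft
  rw [← Finset.sum_add_distrib]
  refine Finset.sum_congr rfl fun x _ => ?_
  push_cast; ring

lemma tdft_smul (c : ℝ) (h : Torus n → ℝ) (k : Torus n) :
    tdft n (fun x => c * h x) k = c * tdft n h k := by
  unfold tdft
  rw [Finset.mul_sum]
  refine Finset.sum_congr rfl fun x _ => ?_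
  push_cast; ring

/-- symbol of `-∑_{y∈S} (f(x+y)-f(x))` -/
def symb (S : Finset (ℤ × ℤ)) (θ : ℝ × ℝ) : ℝ := ∑ y ∈ S, (1 - Real.cos (θ.1 * y.1 + θ.2 * y.2))

lemma tdft_lap (S : Finset (ℤ × ℤ)) (hS : ∀ y ∈ S, -y ∈ S) (g : Torus n → ℝ) (k : Torus n) (a b : ℤ)
    (hk : k = torusProj n (a, b)) :
    tdft n (fun x => ∑ y ∈ S, (g (x + torusProj n y) - g x)) k
      = -(symb S (2 * π / n * a, 2 * π / n * b) : ℂ) * tdft n g k := by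
  have h1 : tdft n (fun x => ∑ y ∈ S, (g (x + torusProj n y) - g x)) k
      = ∑ y ∈ S, (chi n k (torusProj n y) - 1) * tdft n g k := by
    have : ∀ y, (chi n k (torusProj n y) - 1) * tdft n g k
        = tdft n (fun x => g (x + torusProj n y)) k - tdft n g k := by
      intro y; rw [tdft_shift]; ring
    simp_rw [this]
    unfold tdft
    simp_rw [← Finset.sum_sub_distrib]
    rw [Finset.sum_comm]
    refine Finset.sum_congr rfl fun x _ => ?_
    push_cast
    rw [Finset.sum_mul]
    refine Finset.sum_congr rfl fun y _ => ?_
    ring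
  rw [h1, ← Finset.sum_mul]
  congr 1
  have h2 : ∑ y ∈ S, (chi n k (torusProj n y) - 1) = ∑ y ∈ S, (chi n k (torusProj n (-y)) - 1) :=
    Finset.sum_nbij' (fun y => -y) (fun y => -y) hS hS (by simp) (by simp) (by simp)
  have h3 : 2 * ∑ y ∈ S, (chi n k (torusProj n y) - 1) = 2 * (-(symb S (2 * π / n * a, 2 * π / n * b) : ℂ)) := by
    rw [two_mul]
    nth_rw 2 [h2]
    rw [← Finset.sum_add_distrib, symb]
    push_cast
    rw [← Finset.sum_neg_distrib, Finset.mul_sum]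
    refine Finset.sum_congr rfl fun y _ => ?_
    rw [chi_proj n k a b hk, chi_proj n k a b hk, Complex.cos]
    push_cast
    have e1 : ∀ z : ℂ, Complex.I * z = z * Complex.I := fun z => mul_comm _ _
    simp only [e1, Prod.fst_neg, Prod.snd_neg]
    push_cast
    ring_nf
  exact mul_left_cancel₀ two_ne_zero h3

lemma dirsZ_neg : ∀ y ∈ dirsZ, -y ∈ dirsZ := by decide

lemma J_neg {J : Finset (ℤ × ℤ)} (hJ : StepDist J) : ∀ y ∈ J, -y ∈ J := by
  intro y hy
  exact hJ.refl₂ _ (hJ.refl₁ _ hy)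

end part1

def thetaOf (n : ℕ) (k : Torus n) : ℝ × ℝ :=
  (2 * π / n * (k.1.valMinAbs : ℝ), 2 * π / n * (k.2.valMinAbs : ℝ))

def lamJ (J : Finset (ℤ × ℤ)) (θ : ℝ × ℝ) : ℝ := (J.card : ℝ)⁻¹ * symb J θ

def Rm (J : Finset (ℤ × ℤ)) (γ s m2 : ℝ) (θ : ℝ × ℝ) : ℝ :=
  (1 - s * γ * symb dirsZ θ) /
    ((lamJ J θ + m2) * (1 - s * γ * symb dirsZ θ) + s * symb dirsZ θ)

lemma torusProj_valMinAbs (n : ℕ) (k : Torus n) :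
    k = torusProj n (k.1.valMinAbs, k.2.valMinAbs) := by
  simp [torusProj]

lemma tdft_lapNN (n : ℕ) [NeZero n] (g : Torus n → ℝ) (k : Torus n) :
    tdft n (lapNN n g) k = -(symb dirsZ (thetaOf n k) : ℂ) * tdft n g k :=
  tdft_lap n dirsZ dirsZ_neg g k _ _ (torusProj_valMinAbs n k)

lemma tdft_lapJ (n : ℕ) [NeZero n] {J : Finset (ℤ × ℤ)} (hJ : StepDist J) (g : Torus n → ℝ)
    (k : Torus n) :
    tdft n (laplacianJ J n g) k = -(lamJ J (thetaOf n k) : ℂ) * tdft n g k := by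
  have h : laplacianJ J n g = fun x => (J.card : ℝ)⁻¹ *
      (fun x => ∑ y ∈ J, (g (x + torusProj n y) - g x)) x := rfl
  rw [h, tdft_smul, tdft_lap n J (J_neg hJ) g k _ _ (torusProj_valMinAbs n k), lamJ, thetaOf]
  push_cast; ring

lemma val_formula (n : ℕ) [NeZero n] {J : Finset (ℤ × ℤ)} (hJ : StepDist J) (γ s m2 : ℝ)
    (g : Torus n → ℝ) (val : ℝ) (hv : IsCtildeVal J n γ s m2 g val)
    (hD : ∀ θ, (lamJ J θ + m2) * (1 - s * γ * symb dirsZ θ) + s * symb dirsZ θ ≠ 0) :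
    val = ((n : ℝ) ^ 2)⁻¹ * ∑ k, Complex.normSq (tdft n g k) * Rm J γ s m2 (thetaOf n k) := by
  obtain ⟨u, hu, hval⟩ := hv
  have hn : (n : ℂ) ≠ 0 := by exact_mod_cast NeZero.ne n
  set h : Torus n → ℝ := fun x => g x + (s * γ) * lapNN n g x with hh
  set w : Torus n → ℝ := fun x => h x + s * lapNN n u x with hw
  set z : Torus n → ℝ := fun x => u x + γ * w x with hz
  set v : Torus n → ℝ := fun x => u x + (s * γ) * lapNN n u x with hvd
  have hval' : val = γ * (∑ x, g x * h x) + ∑ x, g x * v x := by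
    rw [hval, tsum_fintype, tsum_fintype]
  have e_h : ∀ k, tdft n h k = tdft n g k + ((s * γ : ℝ) : ℂ) * (-(symb dirsZ (thetaOf n k) : ℂ) * tdft n g k) := by
    intro k; rw [hh, tdft_add, tdft_smul, tdft_lapNN]
  have e_v : ∀ k, tdft n v k = tdft n u k + ((s * γ : ℝ) : ℂ) * (-(symb dirsZ (thetaOf n k) : ℂ) * tdft n u k) := by
    intro k; rw [hvd, tdft_add, tdft_smul, tdft_lapNN]
  have e_w : ∀ k, tdft n w k = tdft n h k + (s : ℂ) * (-(symb dirsZ (thetaOf n k) : ℂ) * tdft n u k) := by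
    intro k; rw [hw, tdft_add, tdft_smul, tdft_lapNN]
  have e_z : ∀ k, tdft n z k = tdft n u k + (γ : ℂ) * tdft n w k := by
    intro k; rw [hz, tdft_add, tdft_smul]
  have e_eq : ∀ k, (-1 : ℂ) * (-(lamJ J (thetaOf n k) : ℂ) * tdft n z k) + (m2 : ℂ) * tdft n z k
      = tdft n w k := by
    intro k
    have : w = fun x => (-1 : ℝ) * laplacianJ J n z x + m2 * z x := by
      funext x
      have h9 : -laplacianJ J n z x + m2 * z x = w x := hu x
      linarith
    have h8 : tdft n w k = tdft n (fun x => (-1 : ℝ) * laplacianJ J n z x + m2 * z x) k := by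
      rw [← this]
    rw [h8, tdft_add n (fun x => (-1 : ℝ) * laplacianJ J n z x) (fun x => m2 * z x),
      tdft_smul, tdft_smul, tdft_lapJ n hJ]
    push_cast; ring
  have key : ∀ k, (starRingEnd ℂ) (tdft n g k) * ((γ : ℂ) * tdft n h k + tdft n v k)
      = ((Complex.normSq (tdft n g k) * Rm J γ s m2 (thetaOf n k) : ℝ) : ℂ) := by
    intro k
    have h0 := hD (thetaOf n k)
    have h1 := e_eq k
    rw [e_z, e_w, e_h] at h1
    rw [e_h, e_v, Rm]
    push_cast
    rw [Complex.normSq_eq_conj_mul_self, mul_assoc ((starRingEnd ℂ) (tdft n g k)) (tdft n g k)]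
    refine congrArg (fun z => (starRingEnd ℂ) (tdft n g k) * z) ?_
    have h0' : ((lamJ J (thetaOf n k) : ℂ) + m2) * (1 - s * γ * symb dirsZ (thetaOf n k)) + s * symb dirsZ (thetaOf n k) ≠ 0 := by
      exact_mod_cast h0
    rw [mul_div_assoc', eq_div_iff h0']
    push_cast at h1
    generalize (lamJ J (thetaOf n k) : ℂ) = lj at *
    generalize (symb dirsZ (thetaOf n k) : ℂ) = l at *
    generalize tdft n u k = U at *
    generalize tdft n g k = G at *
    linear_combination (1 - s * γ * l) * h1
  have hsum : (n : ℂ) ^ 2 * (val : ℂ) = ((∑ k, Complex.normSq (tdft n g k) * Rm J γ s m2 (thetaOf n k) : ℝ) : ℂ) := by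
    rw [Complex.ofReal_sum]
    simp_rw [← key, mul_add]
    rw [Finset.sum_add_distrib, plancherel]
    have : ∀ k, (starRingEnd ℂ) (tdft n g k) * ((γ : ℂ) * tdft n h k)
        = γ * ((starRingEnd ℂ) (tdft n g k) * tdft n h k) := fun k => by ring
    simp_rw [this]
    rw [← Finset.mul_sum, plancherel, hval']
    push_cast; ring
  have hsum' : (n : ℝ) ^ 2 * val = ∑ k, Complex.normSq (tdft n g k) * Rm J γ s m2 (thetaOf n k) := by
    exact_mod_cast hsum
  rw [← hsum']
  have hn' : (n : ℝ) ≠ 0 := by exact_mod_cast NeZero.ne n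
  field_simp

/-! ### Symbol bounds -/

lemma symb_dirsZ (θ : ℝ × ℝ) : symb dirsZ θ = 4 - 2 * cos θ.1 - 2 * cos θ.2 := by
  unfold symb dirsZ
  rw [Finset.sum_insert (by decide), Finset.sum_insert (by decide), Finset.sum_insert (by decide), Finset.sum_singleton]
  simp
  ring

lemma symb_nonneg (S : Finset (ℤ × ℤ)) (θ : ℝ × ℝ) : 0 ≤ symb S θ :=
  Finset.sum_nonneg fun y _ => by linarith [cos_le_one (θ.1 * y.1 + θ.2 * y.2)]

lemma dirsZ_sub {J : Finset (ℤ × ℤ)} (hJ : StepDist J) : dirsZ ⊆ J := by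
  intro x hx
  simp only [dirsZ, Finset.mem_insert, Finset.mem_singleton] at hx
  rcases hx with rfl | rfl | rfl | rfl
  exacts [hJ.nn₁, hJ.nn₂, hJ.nn₃, hJ.nn₄]

lemma card_pos' {J : Finset (ℤ × ℤ)} (hJ : StepDist J) : (0 : ℝ) < J.card := by
  exact_mod_cast Finset.card_pos.2 ⟨_, hJ.nn₁⟩

lemma card_ge_one {J : Finset (ℤ × ℤ)} (hJ : StepDist J) : (1 : ℝ) ≤ J.card := by
  exact_mod_cast Finset.card_pos.2 ⟨_, hJ.nn₁⟩

lemma lamJ_ge {J : Finset (ℤ × ℤ)} (hJ : StepDist J) (θ : ℝ × ℝ) :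
    (J.card : ℝ)⁻¹ * symb dirsZ θ ≤ lamJ J θ := by
  unfold lamJ
  refine mul_le_mul_of_nonneg_left ?_ (inv_nonneg.2 (card_pos' hJ).le)
  refine Finset.sum_le_sum_of_subset_of_nonneg (dirsZ_sub hJ) fun y _ _ => ?_
  linarith [cos_le_one (θ.1 * y.1 + θ.2 * y.2)]

lemma numer_bound {J : Finset (ℤ × ℤ)} (hJ : StepDist J) {γ s : ℝ} (hγ : γ ∈ Set.Ioo (0 : ℝ) (1 / 3))
    (hs : |s| ≤ (16 * (J.card : ℝ))⁻¹) (θ : ℝ × ℝ) : |s * γ * symb dirsZ θ| ≤ 1 / 2 := by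
  have h1 : symb dirsZ θ ≤ 8 := by
    rw [symb_dirsZ]; linarith [neg_one_le_cos θ.1, neg_one_le_cos θ.2]
  have h2 : |s| ≤ 1 / 16 := by
    refine hs.trans ?_
    rw [one_div]
    exact inv_anti₀ (by norm_num) (by linarith [card_ge_one hJ])
  rw [abs_mul, abs_mul, abs_of_pos hγ.1, abs_of_nonneg (symb_nonneg _ _)]
  calc |s| * γ * symb dirsZ θ ≤ 1 / 16 * (1 / 3) * 8 := by
        gcongr
        · exact symb_nonneg _ _
        · exact hγ.1.le
        · exact hγ.2.le
    _ ≤ 1 / 2 := by norm_num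

lemma denom_bound {J : Finset (ℤ × ℤ)} (hJ : StepDist J) {γ s : ℝ} (hγ : γ ∈ Set.Ioo (0 : ℝ) (1 / 3))
    (hs : |s| ≤ (16 * (J.card : ℝ))⁻¹) {m2 : ℝ} (hm : 0 ≤ m2) (θ : ℝ × ℝ) :
    (4 * (J.card : ℝ))⁻¹ * symb dirsZ θ + m2 / 2
      ≤ (lamJ J θ + m2) * (1 - s * γ * symb dirsZ θ) + s * symb dirsZ θ := by
  have h1 := abs_le.1 (numer_bound hJ hγ hs θ)
  have h2 := lamJ_ge hJ θ
  have h3 := symb_nonneg dirsZ θ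
  have h4 := (abs_le.1 hs).1
  have hc := card_pos' hJ
  set c := (J.card : ℝ)⁻¹ with hcdef
  have e1 : (16 * (J.card : ℝ))⁻¹ = c / 16 := by rw [mul_inv]; ring
  have e2 : (4 * (J.card : ℝ))⁻¹ = c / 4 := by rw [mul_inv]; ring
  have hc' : 0 < c := inv_pos.2 hc
  rw [e2]; rw [e1] at h4
  generalize symb dirsZ θ = l at *
  have h5 : 0 ≤ lamJ J θ + m2 := by have := mul_nonneg hc'.le h3; linarith
  have h6 : (lamJ J θ + m2) * (1 / 2) ≤ (lamJ J θ + m2) * (1 - s * γ * l) :=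
    mul_le_mul_of_nonneg_left (by linarith) h5
  have h7 : -(c / 16) * l ≤ s * l := mul_le_mul_of_nonneg_right h4 h3
  have := mul_nonneg hc'.le h3
  linarith

lemma symb_lower {θ : ℝ × ℝ} (h1 : |θ.1| ≤ π) (h2 : |θ.2| ≤ π) :
    4 / π ^ 2 * (θ.1 ^ 2 + θ.2 ^ 2) ≤ symb dirsZ θ := by
  rw [symb_dirsZ]
  have a := cos_le_one_sub_mul_cos_sq h1
  have b := cos_le_one_sub_mul_cos_sq h2
  have : 4 / π ^ 2 = 2 * (2 / π ^ 2) := by ring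
  rw [this]
  linarith

lemma Rm_bound {J : Finset (ℤ × ℤ)} (hJ : StepDist J) {γ s : ℝ} (hγ : γ ∈ Set.Ioo (0 : ℝ) (1 / 3))
    (hs : |s| ≤ (16 * (J.card : ℝ))⁻¹) {θ : ℝ × ℝ} (h1 : |θ.1| ≤ π) (h2 : |θ.2| ≤ π)
    (h0 : 0 < θ.1 ^ 2 + θ.2 ^ 2) :
    |Rm J γ s 0 θ| ≤ 2 * π ^ 2 * J.card / (θ.1 ^ 2 + θ.2 ^ 2) := by
  have hc := card_pos' hJ
  have a := symb_lower h1 h2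
  have b := denom_bound hJ hγ hs le_rfl θ
  have c := abs_le.1 (numer_bound hJ hγ hs θ)
  have hp := pi_pos
  have b' : (π ^ 2 * (J.card : ℝ))⁻¹ * (θ.1 ^ 2 + θ.2 ^ 2) ≤ (lamJ J θ + 0) * (1 - s * γ * symb dirsZ θ) + s * symb dirsZ θ := by
    refine le_trans ?_ b
    have := mul_le_mul_of_nonneg_left a (inv_nonneg.2 (by linarith : 0 ≤ 4 * (J.card : ℝ)))
    refine le_trans (le_of_eq ?_) (this.trans (by linarith))
    field_simp
  have hpos : 0 < (π ^ 2 * (J.card : ℝ))⁻¹ * (θ.1 ^ 2 + θ.2 ^ 2) := by positivity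
  unfold Rm
  rw [abs_div, abs_of_pos (hpos.trans_le b')]
  calc _ ≤ 2 / ((π ^ 2 * (J.card : ℝ))⁻¹ * (θ.1 ^ 2 + θ.2 ^ 2)) := by
        gcongr
        rw [abs_le]; constructor <;> linarith
    _ = _ := by field_simp

/-! ### quadratic form of J -/

lemma J_quad {J : Finset (ℤ × ℤ)} (hJ : StepDist J) (q : ℝ × ℝ) :
    ∑ y ∈ J, (q.1 * y.1 + q.2 * y.2) ^ 2 / 2 = J.card * (vJsq J * (q.1 ^ 2 + q.2 ^ 2)) := by
  have hc := card_pos' hJ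
  have hcross : ∑ y ∈ J, ((y.1 : ℝ) * y.2) = 0 := by
    have : ∑ y ∈ J, ((y.1 : ℝ) * y.2) = ∑ y ∈ J, -((y.1 : ℝ) * y.2) :=
      Finset.sum_nbij' (fun y => (-y.1, y.2)) (fun y => (-y.1, y.2)) hJ.refl₁ hJ.refl₁
        (by simp) (by simp) (by simp)
    rw [Finset.sum_neg_distrib] at this
    linarith
  have hsq : ∑ y ∈ J, ((y.2 : ℝ)) ^ 2 = ∑ y ∈ J, ((y.1 : ℝ)) ^ 2 :=
    Finset.sum_nbij' (fun y => (-y.2, y.1)) (fun y => (y.2, -y.1)) hJ.rot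
      (fun y hy => by have := J_neg hJ _ (hJ.rot _ hy); simpa using this)
      (by simp) (by simp) (by simp)
  have : ∀ y ∈ J, (q.1 * y.1 + q.2 * y.2) ^ 2 / 2 = q.1 ^ 2 / 2 * (y.1 : ℝ) ^ 2
      + q.2 ^ 2 / 2 * (y.2 : ℝ) ^ 2 + q.1 * q.2 * ((y.1 : ℝ) * y.2) := fun y _ => by ring
  rw [Finset.sum_congr rfl this, Finset.sum_add_distrib, Finset.sum_add_distrib, ← Finset.mul_sum,
    ← Finset.mul_sum, ← Finset.mul_sum, hcross, hsq, vJsq]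
  field_simp
  ring

lemma dirsZ_quad (q : ℝ × ℝ) :
    ∑ y ∈ dirsZ, (q.1 * y.1 + q.2 * y.2) ^ 2 / 2 = q.1 ^ 2 + q.2 ^ 2 := by
  unfold dirsZ
  rw [Finset.sum_insert (by decide), Finset.sum_insert (by decide), Finset.sum_insert (by decide), Finset.sum_singleton]
  simp
  ring

lemma vJsq_ge {J : Finset (ℤ × ℤ)} (hJ : StepDist J) : (J.card : ℝ)⁻¹ ≤ vJsq J := by
  have h := J_quad hJ (1, 0)
  have h2 := dirsZ_quad (1, 0)
  have h3 : ∑ y ∈ dirsZ, ((1 : ℝ) * y.1 + 0 * y.2) ^ 2 / 2 ≤ ∑ y ∈ J, ((1 : ℝ) * y.1 + 0 * y.2) ^ 2 / 2 :=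
    Finset.sum_le_sum_of_subset_of_nonneg (dirsZ_sub hJ) fun y _ _ => by positivity
  simp only at h h2
  rw [h, h2] at h3
  rw [inv_le_iff_one_le_mul₀' (card_pos' hJ)]
  linarith

lemma one_sub_cos_tendsto {t a : ℕ → ℝ} {x : ℝ} (ht : ∀ N, 0 < t N) (ht0 : Tendsto t atTop (nhds 0))
    (ha : Tendsto a atTop (nhds x)) :
    Tendsto (fun N => (1 - cos (t N * a N)) / t N ^ 2) atTop (nhds (x ^ 2 / 2)) := by
  have e : ∀ N, (1 - cos (t N * a N)) / t N ^ 2 = a N ^ 2 / 2 * (sinc (t N * a N / 2)) ^ 2 := by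
    intro N
    have h1 : 1 - cos (t N * a N) = 2 * sin (t N * a N / 2) ^ 2 := by
      rw [Real.sin_sq_eq_half_sub]; ring_nf
    have h2 : (t N * a N / 2) * sinc (t N * a N / 2) = sin (t N * a N / 2) := by
      by_cases h : t N * a N / 2 = 0
      · simp [h]
      · rw [sinc_of_ne_zero h, mul_div_cancel₀ _ h]
    rw [h1, ← h2]
    have := (ht N).ne'
    field_simp
  simp_rw [e]
  have h3 : Tendsto (fun N => sinc (t N * a N / 2)) atTop (nhds (sinc 0)) := by
    refine (continuous_sinc.tendsto 0).comp ?_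
    simpa using (ht0.mul ha).div_const 2
  have := ((ha.pow 2).div_const 2).mul (h3.pow 2)
  simpa using this

lemma symb_tendsto (S : Finset (ℤ × ℤ)) {t : ℕ → ℝ} {a : ℕ → ℝ × ℝ} {x : ℝ × ℝ} (ht : ∀ N, 0 < t N)
    (ht0 : Tendsto t atTop (nhds 0)) (ha : Tendsto a atTop (nhds x)) :
    Tendsto (fun N => symb S (t N • a N) / t N ^ 2) atTop
      (nhds (∑ y ∈ S, (x.1 * y.1 + x.2 * y.2) ^ 2 / 2)) := by
  unfold symb
  simp_rw [Finset.sum_div]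
  refine tendsto_finsetSum _ fun y _ => ?_
  have ha1 : Tendsto (fun N => (a N).1 * (y.1 : ℝ) + (a N).2 * (y.2 : ℝ)) atTop
      (nhds (x.1 * y.1 + x.2 * y.2)) :=
    (((continuous_fst.tendsto x).comp ha).mul_const _).add (((continuous_snd.tendsto x).comp ha).mul_const _)
  refine (one_sub_cos_tendsto ht ht0 ha1).congr fun N => ?_
  simp only [Prod.smul_fst, Prod.smul_snd, smul_eq_mul]
  ring_nf

lemma Rm_tendsto {J : Finset (ℤ × ℤ)} (hJ : StepDist J) {γ s : ℝ} 
    (hs : |s| ≤ (16 * (J.card : ℝ))⁻¹) {t : ℕ → ℝ} {a : ℕ → ℝ × ℝ} {x : ℝ × ℝ} (ht : ∀ N, 0 < t N)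
    (ht0 : Tendsto t atTop (nhds 0)) (ha : Tendsto a atTop (nhds x)) (hx : 0 < x.1 ^ 2 + x.2 ^ 2) :
    Tendsto (fun N => t N ^ 2 * Rm J γ s 0 (t N • a N)) atTop
      (nhds ((vJsq J + s)⁻¹ * (x.1 ^ 2 + x.2 ^ 2)⁻¹)) := by
  have hc := card_pos' hJ
  have h1 := symb_tendsto dirsZ ht ht0 ha
  rw [dirsZ_quad] at h1
  have h2 := (symb_tendsto J ht ht0 ha).const_mul ((J.card : ℝ)⁻¹)
  rw [J_quad hJ, inv_mul_cancel_left₀ hc.ne'] at h2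
  have h3 : Tendsto (fun N => symb dirsZ (t N • a N)) atTop (nhds 0) := by
    have := (ht0.pow 2).mul h1
    simp only [ne_eq, OfNat.ofNat_ne_zero, not_false_eq_true, zero_pow, zero_mul] at this
    refine this.congr fun N => ?_
    have := (ht N).ne'
    field_simp
  have h4 : Tendsto (fun N => 1 - s * γ * symb dirsZ (t N • a N)) atTop (nhds 1) := by
    simpa using (h3.const_mul (s * γ)).const_sub 1
  have h5 := (h2.mul h4).add (h1.const_mul s)
  have hv : 0 < vJsq J + s := by
    have a1 := vJsq_ge hJ
    have a2 := (abs_le.1 hs).1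
    rw [mul_inv] at a2
    have : 0 < (J.card : ℝ)⁻¹ := inv_pos.2 hc
    linarith
  have e5 : vJsq J * (x.1 ^ 2 + x.2 ^ 2) * 1 + s * (x.1 ^ 2 + x.2 ^ 2) = (vJsq J + s) * (x.1 ^ 2 + x.2 ^ 2) := by ring
  rw [e5] at h5
  have h6 := h4.div h5 (mul_pos hv hx).ne'
  rw [one_div, mul_inv] at h6
  refine h6.congr fun N => ?_
  have := (ht N).ne'
  simp only [Rm, lamJ, Pi.div_apply, add_zero]
  rw [show (J.card : ℝ)⁻¹ * (symb J (t N • a N) / t N ^ 2) * (1 - s * γ * symb dirsZ (t N • a N)) +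
    s * (symb dirsZ (t N • a N) / t N ^ 2) = ((J.card : ℝ)⁻¹ * symb J (t N • a N) * (1 - s * γ * symb dirsZ (t N • a N)) + s * symb dirsZ (t N • a N)) / t N ^ 2 by ring]
  rw [div_div_eq_mul_div]
  ring

/-! ### Lattice Fourier transform -/

def zker (θ : ℝ × ℝ) (x : ℤ × ℤ) : ℂ :=
  Complex.exp (-Complex.I * ((θ.1 * x.1 + θ.2 * x.2 : ℝ) : ℂ))

def zFT (h : ℤ × ℤ → ℝ) (θ : ℝ × ℝ) : ℂ := ∑' x : ℤ × ℤ, (h x : ℂ) * zker θ x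

lemma norm_zker (θ : ℝ × ℝ) (x : ℤ × ℤ) : ‖zker θ x‖ = 1 := by
  have : zker θ x = Complex.exp (Complex.I * ((-(θ.1 * x.1 + θ.2 * x.2) : ℝ) : ℂ)) := by
    unfold zker; congr 1; push_cast; ring
  rw [this, Complex.norm_exp_I_mul_ofReal]

lemma norm_zker_sub_one (θ : ℝ × ℝ) (x : ℤ × ℤ) : ‖zker θ x - 1‖ ≤ |θ.1 * x.1 + θ.2 * x.2| := by
  have : zker θ x = Complex.exp (Complex.I * ((-(θ.1 * x.1 + θ.2 * x.2) : ℝ) : ℂ)) := by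
    unfold zker; congr 1; push_cast; ring
  rw [this]
  refine Real.norm_exp_I_mul_ofReal_sub_one_le.trans ?_
  rw [Real.norm_eq_abs, abs_neg]

lemma zker_add (θ : ℝ × ℝ) (x y : ℤ × ℤ) : zker θ (x + y) = zker θ x * zker θ y := by
  unfold zker
  rw [← Complex.exp_add]
  congr 1
  simp only [Prod.fst_add, Prod.snd_add]
  push_cast; ring

lemma tdft_toTorus (n : ℕ) [NeZero n] (h : ℤ × ℤ → ℝ) (hfin : (Function.support h).Finite)
    (k : Torus n) : tdft n (toTorus n h) k = zFT h (thetaOf n k) := by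
  classical
  have h0 : ∀ x, x ∉ hfin.toFinset → h x = 0 := by
    intro x hx; simpa using hx
  have h1 : ∀ y, toTorus n h y = ∑ x ∈ hfin.toFinset, if torusProj n x = y then h x else 0 := by
    intro y
    unfold toTorus
    refine tsum_eq_sum fun x hx => ?_
    simp [h0 x hx]
  have h2 : zFT h (thetaOf n k) = ∑ x ∈ hfin.toFinset, (h x : ℂ) * zker (thetaOf n k) x :=
    tsum_eq_sum fun x hx => by simp [h0 x hx]
  rw [h2, tdft]
  simp_rw [h1]
  push_cast
  simp_rw [Finset.sum_mul]
  rw [Finset.sum_comm]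
  refine Finset.sum_congr rfl fun x _ => ?_
  rw [Finset.sum_eq_single (torusProj n x)]
  · simp only [if_true]
    congr 1
    have e : -torusProj n x = torusProj n (-x) := by simp [torusProj]
    rw [e, chi_proj n k _ _ (torusProj_valMinAbs n k), zker, thetaOf]
    congr 1
    simp only [Prod.fst_neg, Prod.snd_neg]
    push_cast; ring
  · intro y _ hy
    rw [if_neg (Ne.symm hy)]; simp
  · simp

def boxF (M : ℝ) : Finset (ℤ × ℤ) := Finset.Icc (-⌊M⌋) ⌊M⌋ ×ˢ Finset.Icc (-⌊M⌋) ⌊M⌋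

lemma mem_boxF (M : ℝ) (x : ℤ × ℤ) : x ∈ boxF M ↔ |(x.1 : ℝ)| ≤ M ∧ |(x.2 : ℝ)| ≤ M := by
  have : ∀ a : ℤ, (-⌊M⌋ ≤ a ∧ a ≤ ⌊M⌋) ↔ |(a : ℝ)| ≤ M := by
    intro a
    rw [abs_le, Int.le_floor, neg_le, Int.le_floor]
    push_cast
    constructor <;> rintro ⟨h1, h2⟩ <;> constructor <;> linarith
  unfold boxF
  rw [Finset.mem_product, Finset.mem_Icc, Finset.mem_Icc, this, this]

lemma card_boxF {M : ℝ} (hM : 0 ≤ M) : ((boxF M).card : ℝ) ≤ (2 * M + 1) ^ 2 := by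
  unfold boxF
  have h0 : 0 ≤ ⌊M⌋ := Int.floor_nonneg.2 hM
  rw [Finset.card_product, Int.card_Icc]
  push_cast
  have : ((⌊M⌋ + 1 - -⌊M⌋).toNat : ℝ) = 2 * (⌊M⌋ : ℝ) + 1 := by
    have : (((⌊M⌋ + 1 - -⌊M⌋).toNat : ℤ) : ℝ) = 2 * (⌊M⌋ : ℝ) + 1 := by
      rw [Int.toNat_of_nonneg (by omega)]; push_cast; ring
    exact_mod_cast this
  rw [this, ← sq]
  have h1 : (⌊M⌋ : ℝ) ≤ M := Int.floor_le M
  have h2 : (0 : ℝ) ≤ ⌊M⌋ := by exact_mod_cast h0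
  gcongr

lemma tsum_box_bound {M B : ℝ} (hM : 0 ≤ M) (hB : 0 ≤ B) (c : ℤ × ℤ → ℂ)
    (hs : ∀ x, c x ≠ 0 → |(x.1 : ℝ)| ≤ M ∧ |(x.2 : ℝ)| ≤ M) (hc : ∀ x, ‖c x‖ ≤ B) :
    ‖∑' x, c x‖ ≤ (2 * M + 1) ^ 2 * B := by
  have : ∑' x, c x = ∑ x ∈ boxF M, c x := by
    refine tsum_eq_sum fun x hx => ?_
    by_contra h
    exact hx ((mem_boxF M x).2 (hs x h))
  rw [this]
  refine (norm_sum_le_of_le _ fun x _ => hc x).trans ?_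
  rw [Finset.sum_const, nsmul_eq_mul]
  exact mul_le_mul_of_nonneg_right (card_boxF hM) hB

lemma zFT_shift (h : ℤ × ℤ → ℝ) (θ : ℝ × ℝ) (μ : ℤ × ℤ) :
    zker θ μ * zFT (fun x => h (x + μ)) θ = zFT h θ := by
  unfold zFT
  rw [← tsum_mul_left, ← Equiv.tsum_eq (Equiv.addRight μ) (fun x => (h x : ℂ) * zker θ x)]
  refine tsum_congr fun x => ?_
  simp only [Equiv.coe_addRight]
  rw [zker_add]; ring

section adm
variable {f : ℝ × ℝ → ℝ} {fε : ℝ → (ℤ × ℤ) → ℝ} {Cf : ℝ}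

lemma adm_Cf_nonneg (h : IsAdmissible f fε Cf) : 0 ≤ Cf := by
  have := (abs_nonneg _).trans (h.grad0 (1 / 2) ⟨by norm_num, by norm_num⟩ 0)
  norm_num at this
  linarith

lemma adm_summable (h : IsAdmissible f fε Cf) {ε : ℝ} (hε : ε ∈ Set.Ioo (0 : ℝ) 1)
    (c : ℤ × ℤ → ℂ) : Summable fun x => (fε ε x : ℂ) * c x := by
  refine summable_of_ne_finset_zero (s := (h.finite_supp ε hε).toFinset) fun x hx => ?_
  have : fε ε x = 0 := by simpa using hx
  simp [this]

lemma adm_zFT_zero (h : IsAdmissible f fε Cf) {ε : ℝ} (hε : ε ∈ Set.Ioo (0 : ℝ) 1) :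
    zFT (fε ε) (0, 0) = 0 := by
  have h1 := h.sum_zero ε hε
  unfold zFT zker
  simp only [zero_mul, add_zero, Complex.ofReal_zero, mul_zero, Complex.exp_zero, mul_one]
  rw [← Complex.ofReal_tsum, h1]; simp

lemma adm_small (h : IsAdmissible f fε Cf) {ε : ℝ} (hε : ε ∈ Set.Ioo (0 : ℝ) 1) (q : ℝ × ℝ) :
    ‖zFT (fε ε) (ε • q)‖ ≤ (2 * Cf + 1) ^ 2 * Cf ^ 2 * (|q.1| + |q.2|) := by
  have hC := adm_Cf_nonneg h
  have hp := hε.1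
  have e1 : zFT (fε ε) (ε • q) = ∑' x, (fε ε x : ℂ) * (zker (ε • q) x - 1) := by
    have a1 := adm_summable h hε (zker (ε • q))
    have a2 := adm_summable h hε (fun _ => 1)
    have := a1.tsum_sub a2
    simp_rw [mul_sub]
    rw [this]
    have h1 := h.sum_zero ε hε
    simp only [mul_one]
    rw [← Complex.ofReal_tsum, h1]; simp [zFT]
  rw [e1]
  have hB : 0 ≤ Cf * ε ^ 2 * (Cf * (|q.1| + |q.2|)) := by positivity
  refine (tsum_box_bound (M := Cf * ε⁻¹) (by positivity) hB _ ?_ ?_).trans ?_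
  · intro x hx
    refine h.supp ε hε x ?_
    rintro h0
    simp [h0] at hx
  · intro x
    by_cases h0 : fε ε x = 0
    · simpa [h0] using hB
    rw [norm_mul, Complex.norm_real, Real.norm_eq_abs]
    refine mul_le_mul (h.grad0 ε hε x) ?_ (norm_nonneg _) (by positivity)
    refine (norm_zker_sub_one _ _).trans ?_
    obtain ⟨s1, s2⟩ := h.supp ε hε x h0
    simp only [Prod.smul_fst, Prod.smul_snd, smul_eq_mul]
    refine (abs_add_le _ _).trans ?_
    rw [abs_mul, abs_mul, abs_mul, abs_mul, abs_of_pos hp]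
    calc ε * |q.1| * |(x.1 : ℝ)| + ε * |q.2| * |(x.2 : ℝ)|
        ≤ ε * |q.1| * (Cf * ε⁻¹) + ε * |q.2| * (Cf * ε⁻¹) := by gcongr
      _ = _ := by field_simp
  · have : 2 * (Cf * ε⁻¹) + 1 ≤ (2 * Cf + 1) * ε⁻¹ := by
      have : 1 ≤ ε⁻¹ := (one_le_inv₀ hp).2 hε.2.le
      linarith
    calc _ ≤ ((2 * Cf + 1) * ε⁻¹) ^ 2 * (Cf * ε ^ 2 * (Cf * (|q.1| + |q.2|))) := by gcongr
      _ = _ := by field_simp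

lemma adm_large (h : IsAdmissible f fε Cf) {ε : ℝ} (hε : ε ∈ Set.Ioo (0 : ℝ) 1) (θ : ℝ × ℝ)
    (μ : ℤ × ℤ) (hμ : μ ∈ dirsZ) (t : ℝ) (ht : |t| ≤ π) (hz : zker θ μ = Complex.exp (Complex.I * (t : ℂ))) :
    |t| * ‖zFT (fε ε) θ‖ ≤ π / 2 * ((2 * Cf + 3) ^ 2 * Cf) * ε := by
  have hC := adm_Cf_nonneg h
  have hp := hε.1
  have hpi := pi_pos
  set d : ℤ × ℤ → ℝ := fun x => fε ε (x + μ) - fε ε x with hd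
  have hi : 1 ≤ ε⁻¹ := (one_le_inv₀ hp).2 hε.2.le
  have hμ1 : |(μ.1 : ℝ)| ≤ 1 ∧ |(μ.2 : ℝ)| ≤ 1 := by
    simp only [dirsZ, Finset.mem_insert, Finset.mem_singleton] at hμ
    rcases hμ with rfl | rfl | rfl | rfl <;> norm_num
  have e1 : zFT (fε ε) θ * (1 - zker θ μ) = zker θ μ * ∑' x, (d x : ℂ) * zker θ x := by
    have a1 : Summable fun x => ((fε ε (x + μ) : ℝ) : ℂ) * zker θ x := by
      have := (Equiv.addRight μ).summable_iff.2 (adm_summable h hε (fun x => zker θ (x - μ)))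
      refine this.congr fun x => ?_
      simp
    have a2 := adm_summable h hε (zker θ)
    have a3 : ∑' x, (d x : ℂ) * zker θ x = zFT (fun x => fε ε (x + μ)) θ - zFT (fε ε) θ := by
      rw [zFT, zFT, ← a1.tsum_sub a2]
      refine tsum_congr fun x => ?_
      rw [hd]; push_cast; ring
    rw [a3, mul_sub (zker θ μ), zFT_shift]; ring
  have e2 : ‖∑' x, (d x : ℂ) * zker θ x‖ ≤ (2 * (Cf * ε⁻¹ + 1) + 1) ^ 2 * (Cf * ε ^ 3) := by
    refine tsum_box_bound (by positivity) (by positivity) _ ?_ ?_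
    · intro x hx
      by_cases h0 : fε ε x = 0
      · have h1 : fε ε (x + μ) ≠ 0 := by
          rintro h1; apply hx; simp [hd, h0, h1]
        obtain ⟨s1, s2⟩ := h.supp ε hε _ h1
        simp only [Prod.fst_add, Prod.snd_add] at s1 s2
        push_cast at s1 s2
        simp only [abs_le] at s1 s2 hμ1 ⊢
        obtain ⟨⟨_, _⟩, _, _⟩ := hμ1
        obtain ⟨_, _⟩ := s1
        obtain ⟨_, _⟩ := s2
        refine ⟨⟨?_, ?_⟩, ?_, ?_⟩ <;> linarith
      · obtain ⟨s1, s2⟩ := h.supp ε hε _ h0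
        constructor <;> linarith
    · intro x
      rw [norm_mul, norm_zker, mul_one, Complex.norm_real, Real.norm_eq_abs]
      have := h.grad1 ε hε x μ hμ
      rw [abs_mul, abs_inv, abs_of_pos hp, inv_mul_le_iff₀ hp] at this
      refine this.trans (le_of_eq ?_)
      ring
  have e3 : ‖zFT (fε ε) θ‖ * ‖1 - zker θ μ‖ ≤ (2 * Cf + 3) ^ 2 * Cf * ε := by
    rw [← norm_mul, e1, norm_mul, norm_zker, one_mul]
    refine e2.trans ?_
    have : 2 * (Cf * ε⁻¹ + 1) + 1 ≤ (2 * Cf + 3) * ε⁻¹ := by linarith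
    calc _ ≤ ((2 * Cf + 3) * ε⁻¹) ^ 2 * (Cf * ε ^ 3) := by gcongr
      _ = _ := by field_simp
  have e4 : 2 / π * |t| ≤ ‖1 - zker θ μ‖ := by
    rw [hz, norm_sub_rev, Complex.norm_exp_I_mul_ofReal_sub_one, norm_mul, Real.norm_eq_abs, Real.norm_eq_abs,
      abs_two]
    have := Real.mul_abs_le_abs_sin (x := t / 2) (by rw [abs_div, abs_two]; linarith)
    rw [abs_div, abs_two] at this
    calc 2 / π * |t| = 2 * (2 / π * (|t| / 2)) := by ring
      _ ≤ _ := by gcongr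
  have e5 : ‖zFT (fε ε) θ‖ * (2 / π * |t|) ≤ (2 * Cf + 3) ^ 2 * Cf * ε :=
    (mul_le_mul_of_nonneg_left e4 (norm_nonneg _)).trans e3
  calc |t| * ‖zFT (fε ε) θ‖ = π / 2 * (‖zFT (fε ε) θ‖ * (2 / π * |t|)) := by field_simp
    _ ≤ π / 2 * ((2 * Cf + 3) ^ 2 * Cf * ε) := by gcongr
    _ = _ := by ring

lemma adm_bounds (h : IsAdmissible f fε Cf) : ∃ A : ℝ, 0 ≤ A ∧ ∀ ε ∈ Set.Ioo (0 : ℝ) 1, ∀ q : ℝ × ℝ,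
    |ε * q.1| ≤ π → |ε * q.2| ≤ π →
      Complex.normSq (zFT (fε ε) (ε • q)) ≤ 2 * A ^ 2 * (q.1 ^ 2 + q.2 ^ 2) ∧
      (q.1 ^ 2 + q.2 ^ 2) * Complex.normSq (zFT (fε ε) (ε • q)) ≤ 2 * A ^ 2 := by
  have hC := adm_Cf_nonneg h
  have hpi := pi_pos
  set A1 := (2 * Cf + 1) ^ 2 * Cf ^ 2 with hA1
  set A2 := π / 2 * ((2 * Cf + 3) ^ 2 * Cf) with hA2
  have p1 : 0 ≤ A1 := by positivity
  have p2 : 0 ≤ A2 := by positivity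
  refine ⟨A1 + A2, by positivity, fun ε hε q h1 h2 => ?_⟩
  have hp := hε.1
  have b1 := adm_small h hε q
  have b2 := adm_large h hε (ε • q) (-1, 0) (by decide) (ε * q.1) h1 (by
    unfold zker; congr 1; simp)
  have b3 := adm_large h hε (ε • q) (0, -1) (by decide) (ε * q.2) h2 (by
    unfold zker; congr 1; simp)
  rw [← hA1] at b1
  rw [← hA2, abs_mul, abs_of_pos hp] at b2 b3
  rw [Complex.normSq_eq_norm_sq]
  set z := ‖zFT (fε ε) (ε • q)‖
  have hz : 0 ≤ z := norm_nonneg _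
  have b2' : |q.1| * z ≤ A2 := by
    refine le_of_mul_le_mul_left ?_ hp; linarith
  have b3' : |q.2| * z ≤ A2 := by
    refine le_of_mul_le_mul_left ?_ hp; linarith
  have s1 : (|q.1| * z) ^ 2 ≤ A2 ^ 2 := by gcongr
  have s2 : (|q.2| * z) ^ 2 ≤ A2 ^ 2 := by gcongr
  have s3 : z ^ 2 ≤ (A1 * (|q.1| + |q.2|)) ^ 2 := by gcongr
  rw [mul_pow, sq_abs] at s1 s2
  have hA : A1 ^ 2 ≤ (A1 + A2) ^ 2 := by gcongr; linarith
  have hA' : A2 ^ 2 ≤ (A1 + A2) ^ 2 := by gcongr; linarith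
  constructor
  · have : (|q.1| + |q.2|) ^ 2 ≤ 2 * (q.1 ^ 2 + q.2 ^ 2) := by
      rw [← sq_abs q.1, ← sq_abs q.2]; nlinarith [sq_nonneg (|q.1| - |q.2|)]
    calc z ^ 2 ≤ (A1 * (|q.1| + |q.2|)) ^ 2 := s3
      _ = A1 ^ 2 * (|q.1| + |q.2|) ^ 2 := by ring
      _ ≤ (A1 + A2) ^ 2 * (2 * (q.1 ^ 2 + q.2 ^ 2)) := by gcongr
      _ = _ := by ring
  · linarith

lemma zFT_tendsto (h : IsAdmissible f fε Cf) (hf : Continuous f) {εN : ℕ → ℝ}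
    (hε : ∀ N, εN N ∈ Set.Ioo (0 : ℝ) 1) (h0 : Tendsto εN atTop (nhds 0)) {a : ℕ → ℝ × ℝ} {q : ℝ × ℝ}
    (ha : Tendsto a atTop (nhds q)) :
    Tendsto (fun N => zFT (fε (εN N)) (εN N • a N)) atTop (nhds (contFT f q)) := by
  have hC := adm_Cf_nonneg h
  set H : ℕ → ℤ × ℤ → ℂ := fun N x => (((εN N)⁻¹ ^ 2 * fε (εN N) x : ℝ) : ℂ) * zker (εN N • a N) x with hH
  have e1 : ∀ N, zFT (fε (εN N)) (εN N • a N) = ∫ y : ℝ × ℝ, H N (cellIdx (εN N) y) := by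
    intro N
    have hp := (hε N).1
    have h0' : ∀ x, x ∉ (h.finite_supp _ (hε N)).toFinset → fε (εN N) x = 0 := by
      intro x hx; simpa using hx
    rw [integral_cell hp (H N) (h.finite_supp _ (hε N)).toFinset
      (fun x hx => by simp [hH, h0' x hx]), Finset.smul_sum, zFT,
      tsum_eq_sum (s := (h.finite_supp _ (hε N)).toFinset) (fun x hx => by simp [h0' x hx])]
    refine Finset.sum_congr rfl fun x _ => ?_
    have : (εN N : ℂ) ≠ 0 := by exact_mod_cast hp.ne'
    simp only [hH, Complex.real_smul]
    push_cast
    field_simp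
  simp_rw [e1]
  unfold contFT
  set K : Set (ℝ × ℝ) := Set.Icc (-(Cf + 1)) (Cf + 1) ×ˢ Set.Icc (-(Cf + 1)) (Cf + 1) with hK
  have hKm : MeasurableSet K := measurableSet_Icc.prod measurableSet_Icc
  refine tendsto_integral_of_dominated_convergence (K.indicator fun _ => Cf) ?_ ?_ ?_ ?_
  · intro N
    exact ((measurable_of_countable (H N)).comp (measurable_cellIdx _)).aestronglyMeasurable
  · refine (integrable_indicator_iff hKm).2 (integrableOn_const ?_)
    exact (isCompact_Icc.prod isCompact_Icc).measure_lt_top.ne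
  · intro N
    refine Eventually.of_forall fun y => ?_
    have hp := (hε N).1
    by_cases hz : fε (εN N) (cellIdx (εN N) y) = 0
    · simp only [hH, hz]
      simp only [mul_zero, Complex.ofReal_zero, zero_mul, norm_zero]
      exact Set.indicator_nonneg (fun _ _ => hC) _
    · obtain ⟨s1, s2⟩ := h.supp _ (hε N) _ hz
      have hmem : y ∈ K := by
        have key : ∀ t : ℝ, |(⌊t / εN N⌋ : ℝ)| ≤ Cf * (εN N)⁻¹ → t ∈ Set.Icc (-(Cf + 1)) (Cf + 1) := by
          intro t ht
          have h1 := (floor_cell_iff hp t _).1 rfl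
          rw [Set.mem_Ico] at h1
          have ht' : |(⌊t / εN N⌋ : ℝ) * εN N| ≤ Cf := by
            rw [abs_mul, abs_of_pos hp]
            calc _ ≤ Cf * (εN N)⁻¹ * εN N := by gcongr
              _ = Cf := by field_simp
          rw [abs_le] at ht'
          have := (hε N).2
          constructor <;> nlinarith
        exact ⟨key _ s1, key _ s2⟩
      rw [Set.indicator_of_mem hmem]
      simp only [hH]
      rw [norm_mul, norm_zker, mul_one, Complex.norm_real, Real.norm_eq_abs, abs_mul, abs_of_pos (by positivity)]
      have := h.grad0 _ (hε N) (cellIdx (εN N) y)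
      rw [inv_pow, inv_mul_le_iff₀ (by positivity)]
      linarith
  · refine Eventually.of_forall fun y => ?_
    have c1 := cell_tendsto (fun N => (hε N).1) h0 y.1
    have c2 := cell_tendsto (fun N => (hε N).1) h0 y.2
    have c3 : Tendsto (fun N => f (εN N * ((cellIdx (εN N) y).1 : ℝ), εN N * ((cellIdx (εN N) y).2 : ℝ))) atTop (nhds (f y)) :=
      (hf.tendsto y).comp (c1.prodMk_nhds c2)
    have c4 : Tendsto (fun N => (εN N)⁻¹ ^ 2 * fε (εN N) (cellIdx (εN N) y)
        - f (εN N * ((cellIdx (εN N) y).1 : ℝ), εN N * ((cellIdx (εN N) y).2 : ℝ))) atTop (nhds 0) := by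
      rw [Metric.tendsto_atTop']
      intro δ hδ
      obtain ⟨ε₀, hε₀, hh⟩ := h.approx (δ / 2) (by linarith)
      obtain ⟨N0, hN0⟩ := (h0.eventually (gt_mem_nhds hε₀)).exists_forall_of_atTop
      refine ⟨N0, fun N hN => ?_⟩
      rw [dist_zero_right, Real.norm_eq_abs]
      exact (hh _ (hε N) (hN0 N hN.le) _).trans_lt (by linarith)
    have c5 := c4.add c3
    simp only [sub_add_cancel, zero_add] at c5
    have c6 : Tendsto (fun N => zker (εN N • a N) (cellIdx (εN N) y)) atTop
        (nhds (Complex.exp (-Complex.I * ((q.1 * y.1 + q.2 * y.2 : ℝ) : ℂ)))) := by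
      have a1 := ((continuous_fst.tendsto q).comp ha).mul c1
      have a2 := ((continuous_snd.tendsto q).comp ha).mul c2
      have a3 := (Complex.continuous_exp.tendsto _).comp
        (((Complex.continuous_ofReal.tendsto _).comp (a1.add a2)).const_mul (-Complex.I))
      refine a3.congr fun N => ?_
      simp only [zker, Function.comp, cellIdx, Prod.smul_fst, Prod.smul_snd, smul_eq_mul]
      congr 3
      ring
    exact ((Complex.continuous_ofReal.tendsto _).comp c5).mul c6

end adm

lemma abs_theta_le (n : ℕ) [NeZero n] (k : ZMod n) : |2 * π / n * (k.valMinAbs : ℝ)| ≤ π := by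
  have hn : (0 : ℝ) < n := by exact_mod_cast Nat.pos_of_ne_zero (NeZero.ne n)
  have h := k.valMinAbs_mem_Ioc
  rw [Set.mem_Ioc] at h
  have h1 : -(n : ℝ) ≤ (k.valMinAbs : ℝ) * 2 := by exact_mod_cast h.1.le
  have h2 : (k.valMinAbs : ℝ) * 2 ≤ n := by exact_mod_cast h.2
  have h3 : |(k.valMinAbs : ℝ) * 2| ≤ n := abs_le.2 ⟨h1, h2⟩
  have e : 2 * π / n * (k.valMinAbs : ℝ) = π / n * (k.valMinAbs * 2) := by ring
  rw [e, abs_mul, abs_of_pos (by positivity)]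
  calc _ ≤ π / n * n := by gcongr
    _ = π := by field_simp

lemma valMinAbs_of_small (n : ℕ) [NeZero n] (k : ℤ) (h : |2 * π / n * (k : ℝ)| < π) :
    ((k : ZMod n)).valMinAbs = k := by
  have hn : (0 : ℝ) < n := by exact_mod_cast Nat.pos_of_ne_zero (NeZero.ne n)
  rw [ZMod.valMinAbs_spec]
  refine ⟨rfl, ?_⟩
  have e : 2 * π / n * (k : ℝ) = π / n * (k * 2) := by ring
  rw [e, abs_mul, abs_of_pos (by positivity), div_mul_eq_mul_div, div_lt_iff₀ hn,
    mul_lt_mul_iff_right₀ pi_pos, abs_lt] at h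
  constructor
  · exact_mod_cast h.1
  · exact_mod_cast h.2.le

lemma theta_pos (n : ℕ) [NeZero n] (k : Torus n) (hk : k ≠ 0) :
    0 < (thetaOf n k).1 ^ 2 + (thetaOf n k).2 ^ 2 := by
  have hn : (0 : ℝ) < n := by exact_mod_cast Nat.pos_of_ne_zero (NeZero.ne n)
  have hpi := pi_pos
  have key : ∀ a : ZMod n, a ≠ 0 → 0 < (2 * π / n * (a.valMinAbs : ℝ)) ^ 2 := by
    intro a ha
    have : (a.valMinAbs : ℝ) ≠ 0 := by
      simpa using ha
    positivity
  by_cases h1 : k.1 = 0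
  · have h2 : k.2 ≠ 0 := fun h2 => hk (Prod.ext h1 h2)
    have := key _ h2
    unfold thetaOf; simp only; positivity
  · have := key _ h1
    unfold thetaOf; simp only; positivity

lemma mass_limit (n : ℕ) [NeZero n] {J : Finset (ℤ × ℤ)} (hJ : StepDist J) {γ s : ℝ}
    (hγ : γ ∈ Set.Ioo (0 : ℝ) (1 / 3)) (hs : |s| ≤ (16 * (J.card : ℝ))⁻¹) (g : Torus n → ℝ)
    (hg : tdft n g 0 = 0) (V : ℝ → ℝ) (hV : ∀ m2 > (0 : ℝ), IsCtildeVal J n γ s m2 g (V m2)) :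
    Tendsto V (nhdsWithin 0 (Set.Ioi 0))
      (nhds (((n : ℝ) ^ 2)⁻¹ * ∑ k, Complex.normSq (tdft n g k) * Rm J γ s 0 (thetaOf n k))) := by
  have h1 : ∀ m2 ∈ Set.Ioi (0 : ℝ), ((n : ℝ) ^ 2)⁻¹ * ∑ k, Complex.normSq (tdft n g k) * Rm J γ s m2 (thetaOf n k) = V m2 := by
    intro m2 hm
    have hm' : 0 < m2 := hm
    refine (val_formula n hJ γ s m2 g (V m2) (hV m2 hm) fun θ => ?_).symm
    have a := denom_bound hJ hγ hs hm'.le θ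
    have b : 0 ≤ (4 * (J.card : ℝ))⁻¹ * symb dirsZ θ :=
      mul_nonneg (by positivity) (symb_nonneg _ _)
    have : 0 < (lamJ J θ + m2) * (1 - s * γ * symb dirsZ θ) + s * symb dirsZ θ := by linarith
    exact this.ne'
  refine Tendsto.congr' (eventually_nhdsWithin_of_forall h1) ?_
  refine Tendsto.const_mul _ (tendsto_finsetSum _ fun k _ => ?_)
  by_cases hk : k = 0
  · subst hk; simp [hg]
  refine Tendsto.const_mul _ ?_
  refine Tendsto.mono_left ?_ nhdsWithin_le_nhds
  unfold Rm
  refine ContinuousAt.tendsto (f := fun m2 : ℝ => (1 - s * γ * symb dirsZ (thetaOf n k)) /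
    ((lamJ J (thetaOf n k) + m2) * (1 - s * γ * symb dirsZ (thetaOf n k)) + s * symb dirsZ (thetaOf n k))) ?_
  refine ContinuousAt.div (by fun_prop) (by fun_prop) ?_
  have a := denom_bound hJ hγ hs le_rfl (thetaOf n k)
  have b := symb_lower (θ := thetaOf n k) (abs_theta_le n k.1) (abs_theta_le n k.2)
  have c := theta_pos n k hk
  have hc := card_pos' hJ
  have hpi := pi_pos
  have d : 0 < 4 / π ^ 2 * ((thetaOf n k).1 ^ 2 + (thetaOf n k).2 ^ 2) := by positivity
  have e : 0 < (4 * (J.card : ℝ))⁻¹ * symb dirsZ (thetaOf n k) := mul_pos (by positivity) (d.trans_le b)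
  have : 0 < (lamJ J (thetaOf n k) + 0) * (1 - s * γ * symb dirsZ (thetaOf n k)) + s * symb dirsZ (thetaOf n k) := by linarith
  exact this.ne'

def boxIdx (n : ℕ) [NeZero n] : Finset (ℤ × ℤ) :=
  Finset.univ.image (fun k : Torus n => (k.1.valMinAbs, k.2.valMinAbs))

lemma sum_boxIdx (n : ℕ) [NeZero n] (G : ℝ × ℝ → ℝ) :
    ∑ k : Torus n, G (thetaOf n k)
      = ∑ k ∈ boxIdx n, G (2 * π / n * (k.1 : ℝ), 2 * π / n * (k.2 : ℝ)) := by
  unfold boxIdx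
  rw [Finset.sum_image]
  · rfl
  · intro a _ b _ hab
    rw [Prod.mk.injEq] at hab
    exact Prod.ext (ZMod.injective_valMinAbs hab.1) (ZMod.injective_valMinAbs hab.2)

lemma boxIdx_bound (n : ℕ) [NeZero n] {k : ℤ × ℤ} (hk : k ∈ boxIdx n) :
    |2 * π / n * (k.1 : ℝ)| ≤ π ∧ |2 * π / n * (k.2 : ℝ)| ≤ π := by
  unfold boxIdx at hk
  rw [Finset.mem_image] at hk
  obtain ⟨a, _, rfl⟩ := hk
  exact ⟨abs_theta_le n _, abs_theta_le n _⟩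

lemma mem_boxIdx (n : ℕ) [NeZero n] {k : ℤ × ℤ} (h1 : |2 * π / n * (k.1 : ℝ)| < π)
    (h2 : |2 * π / n * (k.2 : ℝ)| < π) : k ∈ boxIdx n := by
  unfold boxIdx
  rw [Finset.mem_image]
  exact ⟨((k.1 : ZMod n), (k.2 : ZMod n)), Finset.mem_univ _,
    Prod.ext (valMinAbs_of_small n _ h1) (valMinAbs_of_small n _ h2)⟩

lemma weight_bound {z A a b : ℝ} (hz : 0 ≤ z) (hr : 0 < a ^ 2 + b ^ 2)
    (h1 : z ≤ 2 * A ^ 2 * (a ^ 2 + b ^ 2)) (h2 : (a ^ 2 + b ^ 2) * z ≤ 2 * A ^ 2)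
    {x y δ : ℝ} (hδ : δ ≤ 1) (hx : |x - a| ≤ δ) (hy : |y - b| ≤ δ) :
    z / (a ^ 2 + b ^ 2) ≤ 72 * A ^ 2 * ((1 + x ^ 2)⁻¹ * (1 + y ^ 2)⁻¹) := by
  have key : ∀ u v : ℝ, |u - v| ≤ δ → 1 + u ^ 2 ≤ 3 * (1 + v ^ 2) := by
    intro u v h
    have h' := abs_le.1 (h.trans hδ)
    nlinarith [sq_nonneg (u - 2 * v), mul_nonneg (sub_nonneg.2 h'.1) (sub_nonneg.2 h'.2)]
  have kx := key x a hx
  have ky := key y b hy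
  rw [← mul_inv, ← div_eq_mul_inv, div_le_div_iff₀ hr (by positivity)]
  have k1 : (1 + x ^ 2) * (1 + y ^ 2) ≤ (3 * (1 + a ^ 2)) * (3 * (1 + b ^ 2)) := by gcongr
  have k2 : (3 * (1 + a ^ 2)) * (3 * (1 + b ^ 2)) ≤ 9 * (1 + (a ^ 2 + b ^ 2)) ^ 2 := by
    nlinarith [mul_nonneg (sq_nonneg a) (sq_nonneg b), sq_nonneg a, sq_nonneg b, sq_nonneg (a ^ 2), sq_nonneg (b ^ 2)]
  set r := a ^ 2 + b ^ 2
  have k3 : 9 * (1 + r) ^ 2 ≤ 18 + 18 * r ^ 2 := by nlinarith [sq_nonneg (1 - r)]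
  calc z * ((1 + x ^ 2) * (1 + y ^ 2)) ≤ z * (18 + 18 * r ^ 2) := by
        gcongr; exact k1.trans (k2.trans k3)
    _ = 18 * z + 18 * r * (r * z) := by ring
    _ ≤ 18 * (2 * A ^ 2 * r) + 18 * r * (2 * A ^ 2) := by gcongr
    _ = 72 * A ^ 2 * r := by ring

lemma cell_close {δ : ℝ} (hδ : 0 < δ) (x : ℝ) : |x - δ * (⌊x / δ⌋ : ℝ)| ≤ δ := by
  have h1 := (floor_cell_iff hδ x _).1 rfl
  rw [Set.mem_Ico] at h1
  rw [abs_le]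
  constructor <;> nlinarith

lemma volume_limit {J : Finset (ℤ × ℤ)} (hJ : StepDist J) {γ s : ℝ}
    (hγ : γ ∈ Set.Ioo (0 : ℝ) (1 / 3)) (hs : |s| ≤ (16 * (J.card : ℝ))⁻¹)
    {f : ℝ × ℝ → ℝ} {fε : ℝ → (ℤ × ℤ) → ℝ} {Cf : ℝ} (h : IsAdmissible f fε Cf) (hf : Continuous f)
    {εN : ℕ → ℝ} (hε : ∀ N, εN N ∈ Set.Ioo (0 : ℝ) 1) (h0 : Tendsto εN atTop (nhds 0))
    (n : ℕ → ℕ) [∀ N, NeZero (n N)] (hn : Tendsto (fun N => εN N * (n N : ℝ)) atTop atTop) :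
    Tendsto (fun N => ((n N : ℝ) ^ 2)⁻¹ * ∑ k, Complex.normSq (zFT (fε (εN N)) (thetaOf (n N) k))
      * Rm J γ s 0 (thetaOf (n N) k)) atTop (nhds ((vJsq J + s)⁻¹ * gffPairing f)) := by
  classical
  have hpi := pi_pos
  have hnpos : ∀ N, (0 : ℝ) < n N := fun N => by
    exact_mod_cast Nat.pos_of_ne_zero (NeZero.ne (n N))
  set δ : ℕ → ℝ := fun N => 2 * π / (εN N * n N) with hδdef
  have hδ : ∀ N, 0 < δ N := fun N => by
    have := (hε N).1; have := hnpos N; positivity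
  have hδ0 : Tendsto δ atTop (nhds 0) := hn.const_div_atTop (2 * π)
  have hδε : ∀ N, εN N * δ N = 2 * π / n N := fun N => by
    have := (hε N).1.ne'; have := (hnpos N).ne'
    simp only [hδdef]; field_simp
  let Q : ℕ → ℤ × ℤ → ℝ × ℝ := fun N k => (δ N * (k.1 : ℝ), δ N * (k.2 : ℝ))
  have hQ : ∀ N (k : ℤ × ℤ), εN N • Q N k = (2 * π / n N * (k.1 : ℝ), 2 * π / n N * (k.2 : ℝ)) := by
    intro N k
    simp only [Q, Prod.smul_mk, smul_eq_mul, ← mul_assoc, hδε]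
  let H : ℕ → ℤ × ℤ → ℝ := fun N k => if k ∈ boxIdx (n N) then
    Complex.normSq (zFT (fε (εN N)) (εN N • Q N k)) * (εN N ^ 2 * Rm J γ s 0 (εN N • Q N k)) else 0
  have hint : ∀ N, ((n N : ℝ) ^ 2)⁻¹ * ∑ k, Complex.normSq (zFT (fε (εN N)) (thetaOf (n N) k))
      * Rm J γ s 0 (thetaOf (n N) k)
      = ((2 * π) ^ 2)⁻¹ * ∫ x : ℝ × ℝ, H N (cellIdx (δ N) x) := by
    intro N
    rw [integral_cell (hδ N) (H N) (boxIdx (n N)) (fun k hk => if_neg hk),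
      sum_boxIdx (n N) (fun θ => Complex.normSq (zFT (fε (εN N)) θ) * Rm J γ s 0 θ)]
    have : ∑ k ∈ boxIdx (n N), H N k = εN N ^ 2 * ∑ k ∈ boxIdx (n N),
        Complex.normSq (zFT (fε (εN N)) (2 * π / n N * (k.1 : ℝ), 2 * π / n N * (k.2 : ℝ)))
          * Rm J γ s 0 (2 * π / n N * (k.1 : ℝ), 2 * π / n N * (k.2 : ℝ)) := by
      rw [Finset.mul_sum]
      refine Finset.sum_congr rfl fun k hk => ?_
      simp only [H]
      rw [if_pos hk, hQ]; ring
    rw [this, smul_eq_mul]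
    have e : ((n N : ℝ) ^ 2)⁻¹ = ((2 * π) ^ 2)⁻¹ * (εN N * δ N) ^ 2 := by
      rw [hδε]; have := (hnpos N).ne'; field_simp
    rw [e]; ring
  simp_rw [hint]
  have htarget : (vJsq J + s)⁻¹ * gffPairing f = ((2 * π) ^ 2)⁻¹ * ∫ p : ℝ × ℝ,
      Complex.normSq (contFT f p) * ((vJsq J + s)⁻¹ * (p.1 ^ 2 + p.2 ^ 2)⁻¹) := by
    unfold gffPairing
    rw [mul_left_comm, ← integral_const_mul]
    congr 2
    funext p
    ring
  rw [htarget]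
  refine Tendsto.const_mul _ ?_
  obtain ⟨A, hA, hb⟩ := adm_bounds h
  refine tendsto_integral_filter_of_dominated_convergence
    (fun x => (2 * π ^ 2 * J.card * (72 * A ^ 2)) * ((1 + x.1 ^ 2)⁻¹ * (1 + x.2 ^ 2)⁻¹)) ?_ ?_ ?_ ?_
  · refine Eventually.of_forall fun N => ?_
    exact ((measurable_of_countable (H N)).comp (measurable_cellIdx _)).aestronglyMeasurable
  · filter_upwards [hδ0.eventually (gt_mem_nhds one_pos)] with N hN
    refine Eventually.of_forall fun x => ?_
    have hp := (hε N).1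
    have hnn : 0 ≤ (2 * π ^ 2 * J.card * (72 * A ^ 2)) * ((1 + x.1 ^ 2)⁻¹ * (1 + x.2 ^ 2)⁻¹) := by
      positivity
    simp only [H]
    set k := cellIdx (δ N) x with hk
    by_cases hkm : k ∈ boxIdx (n N)
    swap
    · rw [if_neg hkm, norm_zero]; exact hnn
    rw [if_pos hkm]
    have b0 := boxIdx_bound (n N) hkm
    have hQ' := hQ N k
    have q1 : εN N * (Q N k).1 = 2 * π / n N * (k.1 : ℝ) := congrArg Prod.fst hQ'
    have q2 : εN N * (Q N k).2 = 2 * π / n N * (k.2 : ℝ) := congrArg Prod.snd hQ'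
    rw [← q1, ← q2] at b0
    obtain ⟨b1, b2⟩ := hb (εN N) (hε N) (Q N k) b0.1 b0.2
    by_cases hr : (Q N k).1 ^ 2 + (Q N k).2 ^ 2 = 0
    · rw [hr] at b1
      have : Complex.normSq (zFT (fε (εN N)) (εN N • Q N k)) = 0 :=
        le_antisymm (by linarith) (Complex.normSq_nonneg _)
      rw [this, zero_mul, norm_zero]; exact hnn
    have hr' : 0 < (Q N k).1 ^ 2 + (Q N k).2 ^ 2 := lt_of_le_of_ne (by positivity) (Ne.symm hr)
    have w := weight_bound (Complex.normSq_nonneg _) hr' b1 b2 hN.le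
      (cell_close (hδ N) x.1) (cell_close (hδ N) x.2)
    have r := Rm_bound (θ := εN N • Q N k) hJ hγ hs b0.1 b0.2 (by
      simp only [Prod.smul_fst, Prod.smul_snd, smul_eq_mul, mul_pow]
      rw [← mul_add]; positivity)
    simp only [Prod.smul_fst, Prod.smul_snd, smul_eq_mul, mul_pow] at r
    rw [← mul_add] at r
    rw [norm_mul, norm_mul, Real.norm_eq_abs, Real.norm_eq_abs, Real.norm_eq_abs,
      abs_of_nonneg (Complex.normSq_nonneg _), abs_of_pos (by positivity : 0 < εN N ^ 2)]
    calc Complex.normSq (zFT (fε (εN N)) (εN N • Q N k)) * (εN N ^ 2 * |Rm J γ s 0 (εN N • Q N k)|)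
        ≤ Complex.normSq (zFT (fε (εN N)) (εN N • Q N k)) * (εN N ^ 2 *
          (2 * π ^ 2 * J.card / (εN N ^ 2 * ((Q N k).1 ^ 2 + (Q N k).2 ^ 2)))) := by
          gcongr
          exact Complex.normSq_nonneg _
      _ = 2 * π ^ 2 * J.card * (Complex.normSq (zFT (fε (εN N)) (εN N • Q N k)) /
          ((Q N k).1 ^ 2 + (Q N k).2 ^ 2)) := by field_simp
      _ ≤ 2 * π ^ 2 * J.card * (72 * A ^ 2 * ((1 + x.1 ^ 2)⁻¹ * (1 + x.2 ^ 2)⁻¹)) := by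
          gcongr
      _ = _ := by ring
  · refine Integrable.const_mul ?_ _
    exact integrable_inv_one_add_sq.mul_prod integrable_inv_one_add_sq
  · filter_upwards [(Set.countable_singleton (0 : ℝ × ℝ)).ae_notMem volume] with x hx
    have hx0 : 0 < x.1 ^ 2 + x.2 ^ 2 := by
      by_contra hcon
      have e1 : x.1 = 0 := by nlinarith [sq_nonneg x.1, sq_nonneg x.2]
      have e2 : x.2 = 0 := by nlinarith [sq_nonneg x.1, sq_nonneg x.2]
      exact hx (Prod.ext e1 e2)
    have c1 := cell_tendsto hδ hδ0 x.1
    have c2 := cell_tendsto hδ hδ0 x.2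
    have cQ : Tendsto (fun N => Q N (cellIdx (δ N) x)) atTop (nhds x) := c1.prodMk_nhds c2
    have l1 := zFT_tendsto h hf hε h0 cQ
    have l2 := Rm_tendsto (γ := γ) hJ hs (fun N => (hε N).1) h0 cQ hx0
    have l3 := ((Complex.continuous_normSq.tendsto _).comp l1).mul l2
    refine l3.congr' ?_
    have d1 : Tendsto (fun N => |εN N * (δ N * (⌊x.1 / δ N⌋ : ℝ))|) atTop (nhds 0) := by
      simpa using (h0.mul c1).abs
    have d2 : Tendsto (fun N => |εN N * (δ N * (⌊x.2 / δ N⌋ : ℝ))|) atTop (nhds 0) := by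
      simpa using (h0.mul c2).abs
    filter_upwards [d1.eventually (gt_mem_nhds hpi), d2.eventually (gt_mem_nhds hpi)] with N e1 e2
    rw [← mul_assoc, hδε] at e1 e2
    simp only [H]
    rw [if_pos (mem_boxIdx (n N) e1 e2)]
    rfl

/-- **Lemma 2.5, sequence version**: with `ε_N → 0` and `ε_N L^N → ∞`,
`lim_{N→∞} lim_{m²↓0} (f_{ε_N}, C̃^{Λ_N}(s,m²) f_{ε_N}) = (v_J²+s)⁻¹ (f,(−Δ_{ℝ²})⁻¹ f)`. -/
theorem ctilde_sequence_scaling_limit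
    (L : ℕ) (hL : 1 < L) (J : Finset (ℤ × ℤ)) (hJ : StepDist J)
    (γ : ℝ) (hγ : γ ∈ Set.Ioo (0 : ℝ) (1 / 3)) :
    ∃ s₀ > (0 : ℝ), ∀ s : ℝ, |s| ≤ s₀ →
      ∀ f : ℝ × ℝ → ℝ, ContDiff ℝ (⊤ : ℕ∞) f → HasCompactSupport f →
        (∫ x : ℝ × ℝ, f x) = 0 →
        ∀ (fε : ℝ → (ℤ × ℤ) → ℝ) (Cf : ℝ), IsAdmissible f fε Cf →
          ∀ εN : ℕ → ℝ, (∀ N, εN N ∈ Set.Ioo (0 : ℝ) 1) →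
            Tendsto εN atTop (nhds 0) →
            Tendsto (fun N : ℕ => εN N * (L : ℝ) ^ N) atTop atTop →
            ∀ V : ℕ → ℝ → ℝ,
              (∀ N : ℕ, ∀ m2 > (0 : ℝ),
                IsCtildeVal J (L ^ N) γ s m2 (toTorus (L ^ N) (fε (εN N))) (V N m2)) →
              ∃ S₁ : ℕ → ℝ,
                (∀ N : ℕ,
                  Tendsto (V N) (nhdsWithin 0 (Set.Ioi 0)) (nhds (S₁ N))) ∧
                Tendsto S₁ atTop (nhds ((vJsq J + s)⁻¹ * gffPairing f)) := by
  have hc := card_pos' hJ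
  refine ⟨(16 * (J.card : ℝ))⁻¹, by positivity, ?_⟩
  intro s hs f hf _ _ fε Cf h εN hε h0 hn V hV
  haveI : ∀ N, NeZero (L ^ N) := fun N => ⟨pow_ne_zero _ (by omega)⟩
  have hfin := fun N => h.finite_supp (εN N) (hε N)
  refine ⟨fun N => (((L ^ N : ℕ) : ℝ) ^ 2)⁻¹ * ∑ k, Complex.normSq
    (tdft (L ^ N) (toTorus (L ^ N) (fε (εN N))) k) * Rm J γ s 0 (thetaOf (L ^ N) k), fun N => ?_, ?_⟩
  · refine mass_limit (L ^ N) hJ hγ hs _ ?_ (V N) (hV N)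
    rw [tdft_toTorus _ _ (hfin N)]
    have : thetaOf (L ^ N) 0 = (0, 0) := by simp [thetaOf]
    rw [this]
    exact adm_zFT_zero h (hε N)
  · have := volume_limit hJ hγ hs h hf.continuous hε h0 (fun N => L ^ N) (by
      simpa using hn)
    refine this.congr fun N => ?_
    congr 1
    refine Finset.sum_congr rfl fun k _ => ?_
    rw [tdft_toTorus _ _ (hfin N)]

end
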